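/- Let N_1 ∈ ℕ and let X = S_1 = {n ∈ ℕ^d : n_1 ≤ N_1} be the slab in the first coordinate. Then for all z, w ∈ 𝔹^d, the reproducing kernel of H_d(X) is given in closed form by k^X(w,z) = ∑_{n∈X} β(n) (conj z)^n w^n = (1/(1 − ⟨w,z⟩)) · (1 − ( (conj z_1) w_1 / (1 − ⟨w,z⟩ + (conj z_1) w_1) )^{N_1+1}), where ⟨w,z⟩ = ∑_{j=1}^d (conj z_j) w_j; in particular the series on the left converges absolutely to the right-hand side. -/

import Mathlib

open scoped BigOperators ComplexConjugate

noncomputable section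

namespace DruryArveson

/-- Multi-indices. -/
abbrev Idx (d : ℕ) := Fin d → ℕ

/-- The weight `β(n) = |n|!/n!`. -/
def beta (d : ℕ) (n : Idx d) : ℝ :=
  ((∑ j, n j).factorial : ℝ) / ∏ j, ((n j).factorial : ℝ)

/-- standard basis multi-index `e_j`. -/
def e (d : ℕ) (j : Fin d) : Idx d := fun i => if i = j then 1 else 0

/-- A set `X ⊆ ℕ^d` is monotone if its complement is shift invariant. -/
def MonotoneSet (d : ℕ) (X : Set (Idx d)) : Prop :=
  ∀ n, n ∉ X → ∀ j, n + e d j ∉ X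

/-- membership in the Drury–Arveson space (coefficientwise). -/
def MemHd (d : ℕ) (a : Idx d → ℂ) : Prop :=
  Summable fun n => ‖a n‖ ^ 2 / beta d n

/-- the Drury–Arveson norm. -/
def hdNorm (d : ℕ) (a : Idx d → ℂ) : ℝ :=
  Real.sqrt (∑' n, ‖a n‖ ^ 2 / beta d n)

/-- the Drury–Arveson inner product. -/
def hdInner (d : ℕ) (a b : Idx d → ℂ) : ℂ :=
  ∑' n, a n * conj (b n) / (beta d n : ℂ)

/-- membership in `H_d(X)`. -/
def MemHdX (d : ℕ) (X : Set (Idx d)) (a : Idx d → ℂ) : Prop :=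
  (∀ n ∉ X, a n = 0) ∧ MemHd d a

/-- membership in `ℓ²(X, β)`. -/
def MemL2 (d : ℕ) (X : Set (Idx d)) (g : Idx d → ℂ) : Prop :=
  (∀ n ∉ X, g n = 0) ∧ Summable fun n => ‖g n‖ ^ 2 * beta d n

/-- the norm of `ℓ²(ℕ^d, β)`. -/
def l2Norm (d : ℕ) (g : Idx d → ℂ) : ℝ :=
  Real.sqrt (∑' n, ‖g n‖ ^ 2 * beta d n)

/-- the inner product of `ℓ²(ℕ^d, β)`. -/
def l2Inner (d : ℕ) (g h : Idx d → ℂ) : ℂ :=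
  ∑' n, g n * conj (h n) * (beta d n : ℂ)

/-- the compressed backshift `B_j^X = P_X B_j|_{ℓ²(X,β)}`. -/
def BXop (d : ℕ) (X : Set (Idx d)) (j : Fin d) (g : Idx d → ℂ) : Idx d → ℂ :=
  X.indicator fun n => g (n + e d j)

/-- ordered power `(T_1)^{k_1} ∘ ⋯ ∘ (T_d)^{k_d}` of a `d`-tuple of maps. -/
def opPow (d : ℕ) {α : Type*} (T : Fin d → (α → α)) (k : Idx d) : α → α :=
  (List.ofFn fun j => (T j)^[k j]).foldr (· ∘ ·) id

/-- multiplication by `z_j` on coefficients. -/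
def Mop (d : ℕ) (j : Fin d) (a : Idx d → ℂ) : Idx d → ℂ :=
  fun n => if 0 < n j then a (n - e d j) else 0

/-- the compressed multiplication `M_j^X = P_X M_j|_{H_d(X)}`. -/
def MopX (d : ℕ) (X : Set (Idx d)) (j : Fin d) (a : Idx d → ℂ) : Idx d → ℂ :=
  X.indicator (Mop d j a)

/-- the Taylor coefficients of a polynomial of `d` variables. -/
def Qhat (d : ℕ) (Q : MvPolynomial (Fin d) ℂ) (n : Idx d) : ℂ :=
  Q.coeff (Finsupp.equivFunOnFinite.symm n)

/-- `Q(T)` for a `d`-tuple of maps on the coefficient space. -/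
def polyOp (d : ℕ) (Q : MvPolynomial (Fin d) ℂ)
    (T : Fin d → ((Idx d → ℂ) → (Idx d → ℂ))) (a : Idx d → ℂ) : Idx d → ℂ :=
  fun n => ∑ k ∈ Q.support, Q.coeff k * opPow d T (⇑k) a n

/-- operator norm of a map with respect to the `ℓ²(X,β)` norm. -/
def opNormL2 (d : ℕ) (X : Set (Idx d)) (T : (Idx d → ℂ) → (Idx d → ℂ)) : ℝ :=
  sInf {C | 0 ≤ C ∧ ∀ g, MemL2 d X g → l2Norm d (T g) ≤ C * l2Norm d g}

/-- operator norm of a map with respect to the `H_d(X)` norm. -/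
def opNormHdX (d : ℕ) (X : Set (Idx d)) (T : (Idx d → ℂ) → (Idx d → ℂ)) : ℝ :=
  sInf {C | 0 ≤ C ∧ ∀ a, MemHdX d X a → hdNorm d (T a) ≤ C * hdNorm d a}

/-- coefficients of the product `φ · f` of two power series. -/
def mconv (d : ℕ) (φ a : Idx d → ℂ) (m : Idx d) : ℂ :=
  ∑ k ∈ Finset.Iic m, φ k * a (m - k)

/-- `φ` is a multiplier of `H_d`. -/
def IsMultiplier (d : ℕ) (φ : Idx d → ℂ) : Prop :=
  ∀ a, MemHd d a → MemHd d (mconv d φ a)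

/-- the multiplier norm `‖φ‖_{M(H_d)}`. -/
def multNorm (d : ℕ) (φ : Idx d → ℂ) : ℝ :=
  sInf {C | 0 ≤ C ∧ ∀ a, MemHd d a → hdNorm d (mconv d φ a) ≤ C * hdNorm d a}

/-- `A^n = A_1^{n_1} ⋯ A_d^{n_d}` for a tuple of bounded operators. -/
def ApowCLM (d : ℕ) {H : Type*} [NormedAddCommGroup H] [NormedSpace ℂ H]
    (A : Fin d → H →L[ℂ] H) (n : Idx d) : H →L[ℂ] H :=
  (List.ofFn fun j => A j ^ n j).prod

/-- `Q(A) = ∑ c_k A^k` for a tuple of bounded operators. -/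
def QevalCLM (d : ℕ) {H : Type*} [NormedAddCommGroup H] [NormedSpace ℂ H]
    (A : Fin d → H →L[ℂ] H) (Q : MvPolynomial (Fin d) ℂ) : H →L[ℂ] H :=
  ∑ k ∈ Q.support, Q.coeff k • ApowCLM d A ⇑k

/-- monomial `z^n`. -/
def mpow (d : ℕ) (z : Fin d → ℂ) (n : Idx d) : ℂ := ∏ j, z j ^ n j

/-!
Both sides depend only on the products `x j = conj (z j) * w j`, and `β(n)` is a multinomial
coefficient. The slab is the disjoint union of the layers `n i = k` with `k ≤ N`. Splitting off
the coordinate `i` leaves a multi-index `m` with `β(n) = (|m| + k).choose k * β(m)`, so that the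
multinomial theorem and the negative binomial series give `x i ^ k / (1 - s) ^ (k + 1)` for
the sum over a layer, where `s` is the sum of the other `x j`. A finite geometric sum over `k`
remains.
-/

section Multinomial

variable {ι R 𝕜 : Type*} [Fintype ι]

/-- The term `(|n|! / n!) x^n` of the multinomial expansion of `(∑ j, x j) ^ |n|`; for
`x j = conj (z j) * w j` it is the term of the kernel series at `n`. -/
def multinomialTerm [CommSemiring R] (x : ι → R) (n : ι → ℕ) : R :=
  Nat.multinomial Finset.univ n * ∏ j, x j ^ n j

lemma hasSum_multinomialTerm_of_degree [CommSemiring R] [TopologicalSpace R] (x : ι → R) (L : ℕ) :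
    HasSum (fun n : {n : ι → ℕ // ∑ j, n j = L} => multinomialTerm x n) ((∑ j, x j) ^ L) := by
  classical
  have hmem (n : ι → ℕ) : ∑ j, n j = L ↔ n ∈ Finset.piAntidiag Finset.univ L := by simp
  rw [Finset.sum_pow_eq_sum_piAntidiag]
  exact (Equiv.hasSum_iff (Equiv.subtypeEquivRight hmem)).2 (Finset.hasSum _ (multinomialTerm x))

lemma hasSum_comp_degree_mul_multinomialTerm [CommSemiring R] [TopologicalSpace R]
    [IsTopologicalSemiring R] [T3Space R] {c : ℕ → R} {x : ι → R} {a : R}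
    (hsum : Summable fun n : ι → ℕ => c (∑ j, n j) * multinomialTerm x n)
    (ha : HasSum (fun L => c L * (∑ j, x j) ^ L) a) :
    HasSum (fun n : ι → ℕ => c (∑ j, n j) * multinomialTerm x n) a := by
  have hlevel (L : ℕ) : HasSum (fun n : {n : ι → ℕ // ∑ j, n j = L} =>
      c (∑ j, n.1 j) * multinomialTerm x n) (c L * (∑ j, x j) ^ L) :=
    ((hasSum_multinomialTerm_of_degree x L).mul_left (c L)).congr_fun fun n => by rw [n.2]
  let byDegree := Equiv.sigmaFiberEquiv fun n : ι → ℕ => ∑ j, n j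
  have hlevels := (byDegree.hasSum_iff.2 hsum.hasSum).sigma hlevel
  exact hlevels.unique ha ▸ hsum.hasSum

lemma norm_multinomialTerm_le [NormedField 𝕜] (x : ι → 𝕜) (n : ι → ℕ) :
    ‖multinomialTerm x n‖ ≤ multinomialTerm (fun j => ‖x j‖) n := by
  simp only [multinomialTerm, norm_mul, norm_prod, norm_pow]
  gcongr
  simpa using Nat.norm_cast_le (α := 𝕜) (Nat.multinomial Finset.univ n)

lemma summable_multinomialTerm_of_nonneg {x : ι → ℝ} (hx₀ : ∀ j, 0 ≤ x j) (hx : ∑ j, x j < 1) :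
    Summable (multinomialTerm x) := by
  have hnonneg : 0 ≤ multinomialTerm x := fun n =>
    mul_nonneg (Nat.cast_nonneg _) (Finset.prod_nonneg fun j _ => pow_nonneg (hx₀ j) _)
  refine (summable_partition hnonneg (s := fun L => {n | ∑ j, n j = L})
    fun _ => existsUnique_eq').2 ⟨fun L => (hasSum_multinomialTerm_of_degree x L).summable, ?_⟩
  exact (summable_geometric_of_lt_one (Finset.sum_nonneg fun j _ => hx₀ j) hx).congr
    fun L => (hasSum_multinomialTerm_of_degree x L).tsum_eq.symm

lemma summable_norm_multinomialTerm [NormedField 𝕜] {x : ι → 𝕜} (hx : ∑ j, ‖x j‖ < 1) :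
    Summable fun n => ‖multinomialTerm x n‖ :=
  (summable_multinomialTerm_of_nonneg (fun j => norm_nonneg (x j)) hx).of_nonneg_of_le
    (fun _ => norm_nonneg _) (norm_multinomialTerm_le x)

end Multinomial

section Layer

variable {ι R E : Type*} [DecidableEq ι]

/-- The layer `n i = k` of `ι → ℕ`, parametrized by the coordinates other than `i`; sums over a
layer become sums over all multi-indices in one coordinate fewer. -/
def layerEquiv (i : ι) (k : ℕ) :
    {n : ι → ℕ // n i = k} ≃ ({j // j ≠ i} → ℕ) where
  toFun n j := n.1 j
  invFun m := ⟨fun j => if h : j = i then k else m ⟨j, h⟩, by simp⟩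
  left_inv n := Subtype.ext (by grind)
  right_inv m := by grind

variable [Fintype ι]

lemma multinomial_univ_eq_choose_mul (i : ι) (n : ι → ℕ) :
    Nat.multinomial Finset.univ n =
      ((∑ j : {j // j ≠ i}, n j) + n i).choose (n i) *
        Nat.multinomial Finset.univ fun j : {j // j ≠ i} => n j := by
  have hsub (s : Finset ι) (hs : ∀ j, j ∈ s ↔ j ≠ i) : Nat.multinomial s n =
      Nat.multinomial Finset.univ fun j : {j // j ≠ i} => n j := by
    simp only [Nat.multinomial, Finset.sum_subtype s hs, Finset.prod_subtype s hs]
  have hne (j : ι) : j ∈ Finset.univ.erase i ↔ j ≠ i := by simp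
  rw [← Finset.insert_erase (Finset.mem_univ i), Nat.multinomial_insert (Finset.notMem_erase i _),
    hsub _ hne, Finset.sum_subtype _ hne, add_comm]

lemma multinomialTerm_eq_mul_multinomialTerm_ne [CommSemiring R] (x : ι → R) (i : ι)
    (n : ι → ℕ) :
    multinomialTerm x n =
      x i ^ n i * (((∑ j : {j // j ≠ i}, n j) + n i).choose (n i) : R) *
        multinomialTerm (fun j : {j // j ≠ i} => x j) fun j => n j := by
  rw [multinomialTerm, multinomialTerm, multinomial_univ_eq_choose_mul i,
    Fintype.prod_eq_mul_prod_subtype_ne _ i]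
  push_cast
  ring

lemma norm_sum_ne_lt_one [SeminormedAddCommGroup E] {x : ι → E} (hx : ∑ j, ‖x j‖ < 1) (i : ι) :
    ‖∑ j : {j // j ≠ i}, x j‖ < 1 := by
  refine (norm_sum_le _ _).trans_lt ?_
  linarith [Fintype.sum_eq_add_sum_subtype_ne (fun j => ‖x j‖) i, norm_nonneg (x i)]

lemma one_sub_sum_add_eq_one_sub_sum_ne [CommRing R] (x : ι → R) (i : ι) :
    1 - ∑ j, x j + x i = 1 - ∑ j : {j // j ≠ i}, x j := by
  rw [Fintype.sum_eq_add_sum_subtype_ne x i]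
  ring

end Layer

section Slab

variable {ι 𝕜 : Type*} [Fintype ι]

lemma hasSum_multinomialTerm_layer [NormedField 𝕜] [CompleteSpace 𝕜] {x : ι → 𝕜}
    (hx : ∑ j, ‖x j‖ < 1) (i : ι) (k : ℕ) :
    HasSum (fun n : {n : ι → ℕ // n i = k} => multinomialTerm x n)
      (x i ^ k / (1 - ∑ j, x j + x i) ^ (k + 1)) := by
  classical
  let y : {j // j ≠ i} → 𝕜 := fun j => x j
  let c : ℕ → 𝕜 := fun L => x i ^ k * ((L + k).choose k : 𝕜)
  have hsplit : (fun n : {n : ι → ℕ // n i = k} => multinomialTerm x n) =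
      (fun m => c (∑ j, m j) * multinomialTerm y m) ∘ layerEquiv i k := by
    funext n
    rw [multinomialTerm_eq_mul_multinomialTerm_ne x i, n.2]
    rfl
  have hsummable := (summable_norm_multinomialTerm hx).of_norm.subtype {n | n i = k}
  have hseries : HasSum (fun L => c L * (∑ j, y j) ^ L)
      (x i ^ k / (1 - ∑ j, x j + x i) ^ (k + 1)) := by
    simpa only [one_sub_sum_add_eq_one_sub_sum_ne, c, mul_assoc, mul_one_div] using
      (hasSum_choose_mul_geometric_of_norm_lt_one k (norm_sum_ne_lt_one hx i)).mul_left (x i ^ k)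
  rw [hsplit, Equiv.hasSum_iff]
  refine hasSum_comp_degree_mul_multinomialTerm ?_ hseries
  rw [← (layerEquiv i k).summable_iff, ← hsplit]
  exact hsummable

lemma sum_range_pow_div_pow_succ [Field 𝕜] {a u : 𝕜} (hu : u ≠ 0) (hua : u - a ≠ 0) (N : ℕ) :
    ∑ k ∈ Finset.range N, a ^ k / u ^ (k + 1) = 1 / (u - a) * (1 - (a / u) ^ N) := by
  have hratio : 1 - a / u = (u - a) / u := by rw [sub_div, div_self hu]
  calc ∑ k ∈ Finset.range N, a ^ k / u ^ (k + 1)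
      = 1 / u * ∑ k ∈ Finset.range N, (a / u) ^ k := by
        rw [Finset.mul_sum]
        refine Finset.sum_congr rfl fun k _ => ?_
        rw [div_pow, pow_succ]
        field_simp
    _ = 1 / (u - a) * ((1 - a / u) * ∑ k ∈ Finset.range N, (a / u) ^ k) := by
        rw [hratio]
        field_simp
    _ = 1 / (u - a) * (1 - (a / u) ^ N) := by rw [mul_neg_geom_sum]

lemma hasSum_multinomialTerm_slab [NormedField 𝕜] [CompleteSpace 𝕜] {x : ι → 𝕜}
    (hx : ∑ j, ‖x j‖ < 1) (i : ι) (N : ℕ) :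
    HasSum (fun n : {n : ι → ℕ // n i ≤ N} => multinomialTerm x n)
      (1 / (1 - ∑ j, x j) * (1 - (x i / (1 - ∑ j, x j + x i)) ^ (N + 1))) := by
  classical
  have hsum : 1 - ∑ j, x j ≠ 0 :=
    (isUnit_one_sub_of_norm_lt_one ((norm_sum_le _ _).trans_lt hx)).ne_zero
  have hbase : 1 - ∑ j, x j + x i ≠ 0 := by
    rw [one_sub_sum_add_eq_one_sub_sum_ne]
    exact (isUnit_one_sub_of_norm_lt_one (norm_sum_ne_lt_one hx i)).ne_zero
  have hslab : {n : ι → ℕ | n i ≤ N} = ⋃ k ∈ Finset.range (N + 1), {n | n i = k} := by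
    ext n
    simp
  have hdisj : (Finset.range (N + 1) : Set ℕ).Pairwise
      (Function.onFun Disjoint fun k => {n : ι → ℕ | n i = k}) :=
    Set.pairwiseDisjoint_fiber (fun n : ι → ℕ => n i) _
  have hlayers := hasSum_sum_disjoint (f := multinomialTerm x) (Finset.range (N + 1)) hdisj
    fun k _ => hasSum_multinomialTerm_layer hx i k
  rw [sum_range_pow_div_pow_succ hbase (by simpa using hsum), add_sub_cancel_right,
    ← hslab] at hlayers
  exact hlayers

end Slab

lemma sum_mul_lt_one_of_sum_sq_lt_one {ι : Type*} {s : Finset ι} {a b : ι → ℝ}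
    (ha : ∑ j ∈ s, a j ^ 2 < 1) (hb : ∑ j ∈ s, b j ^ 2 < 1) : ∑ j ∈ s, a j * b j < 1 := by
  have hmean : ∑ j ∈ s, a j * b j ≤ ∑ j ∈ s, (a j ^ 2 + b j ^ 2) / 2 :=
    Finset.sum_le_sum fun j _ => by linarith [two_mul_le_add_sq (a j) (b j)]
  rw [← Finset.sum_div, Finset.sum_add_distrib] at hmean
  linarith

section Kernel

variable {d : ℕ}

lemma beta_eq_multinomial (n : Idx d) : beta d n = Nat.multinomial Finset.univ n := by
  have hprod : ∏ j, ((n j).factorial : ℝ) ≠ 0 :=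
    Finset.prod_ne_zero_iff.2 fun j _ => Nat.cast_ne_zero.2 (n j).factorial_ne_zero
  rw [beta, div_eq_iff hprod, mul_comm]
  exact_mod_cast (Nat.multinomial_spec Finset.univ n).symm

lemma beta_mul_mpow_mul_mpow (z w : Fin d → ℂ) (n : Idx d) :
    (beta d n : ℂ) * mpow d z n * mpow d w n = multinomialTerm (fun j => z j * w j) n := by
  simp only [beta_eq_multinomial, mpow, multinomialTerm, mul_pow, Finset.prod_mul_distrib,
    mul_assoc, Complex.ofReal_natCast]

theorem slab_kernel_general (i : Fin d) (N : ℕ) (z w : Fin d → ℂ)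
    (hzw : ∑ j, ‖z j‖ * ‖w j‖ < 1) :
    (Summable fun n : {n : Idx d // n i ≤ N} =>
      ‖(beta d n : ℂ) * mpow d (fun j => conj (z j)) n * mpow d w n‖) ∧
    HasSum (fun n : {n : Idx d // n i ≤ N} =>
        (beta d n : ℂ) * mpow d (fun j => conj (z j)) n * mpow d w n)
      ((1 / (1 - ∑ j, conj (z j) * w j)) *
        (1 - (conj (z i) * w i / (1 - ∑ j, conj (z j) * w j + conj (z i) * w i)) ^ (N + 1))) := by
  have hx : ∑ j, ‖conj (z j) * w j‖ < 1 := by simpa only [norm_mul, RCLike.norm_conj] using hzw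
  simp only [beta_mul_mpow_mul_mpow]
  exact ⟨(summable_norm_multinomialTerm hx).subtype {n | n i ≤ N},
    hasSum_multinomialTerm_slab hx i N⟩

end Kernel

/-- **kernel of a slab.** Let `X = S_1 = {n ∈ ℕ^d : n_1 ≤ N_1}`.  For
`z, w` in the unit ball `𝔹^d`, the reproducing kernel of `H_d(X)`,
`k^X(w,z) = ∑_{n ∈ X} β(n) (conj z)^n w^n`, converges absolutely and equals
`(1/(1-⟨w,z⟩)) (1 - (conj(z_1) w_1 / (1-⟨w,z⟩+conj(z_1) w_1))^{N_1+1})`, where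
`⟨w,z⟩ = ∑_j conj(z_j) w_j`. -/
theorem slab_kernel (d : ℕ) (hd : 0 < d) (N1 : ℕ) (z w : Fin d → ℂ)
    (hz : ∑ j, ‖z j‖ ^ 2 < 1) (hw : ∑ j, ‖w j‖ ^ 2 < 1) :
    (Summable fun n : {n : Idx d // n ⟨0, hd⟩ ≤ N1} =>
      ‖(beta d n : ℂ) * mpow d (fun j => conj (z j)) n * mpow d w n‖) ∧
    HasSum (fun n : {n : Idx d // n ⟨0, hd⟩ ≤ N1} =>
        (beta d n : ℂ) * mpow d (fun j => conj (z j)) n * mpow d w n)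
      ((1 / (1 - ∑ j, conj (z j) * w j)) *
        (1 - (conj (z ⟨0, hd⟩) * w ⟨0, hd⟩ /
            (1 - ∑ j, conj (z j) * w j + conj (z ⟨0, hd⟩) * w ⟨0, hd⟩)) ^ (N1 + 1))) := by
  exact slab_kernel_general ⟨0, hd⟩ N1 z w (sum_mul_lt_one_of_sum_sq_lt_one hz hw)

end DruryArveson
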